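/- Let T > 0, let f, g ∈ C^∞([0,T]×𝕋³), let ℓ ∈ (0,1), and write f_ℓ = P_{≤ℓ^{−1}} f, g_ℓ = P_{≤ℓ^{−1}} g and (fg)_ℓ = P_{≤ℓ^{−1}}(fg) (cutoffs in the space variable). Then for every integer N ≥ 0 there is a constant C(N), depending only on N and the fixed cutoff function φ, such that ‖f_ℓ g_ℓ − (fg)_ℓ‖_N ≤ C(N) ℓ^{2−N} ‖f‖₁ ‖g‖₁. -/

import Mathlib

open MeasureTheory

noncomputable section

/-- Points of `ℝ³`. -/
abbrev V3 : Type := Fin 3 → ℝ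

/-- The fundamental domain `[-π, π]³` of the torus `𝕋³`. -/
def T3 : Set V3 := Set.Icc (fun _ => -Real.pi) (fun _ => Real.pi)

/-- A function on `ℝ³` is (`2π`-)periodic, i.e. descends to the torus `𝕋³`. -/
def PerSpace {α : Type*} (f : V3 → α) : Prop :=
  ∀ (x : V3) (v : Fin 3 → ℤ), f (fun i => x i + 2 * Real.pi * v i) = f x

/-- A time-dependent function on `ℝ³` is (`2π`-)periodic in space. -/
def PerSpaceT {α : Type*} (f : ℝ × V3 → α) : Prop :=
  ∀ (t : ℝ) (x : V3) (v : Fin 3 → ℤ), f (t, fun i => x i + 2 * Real.pi * v i) = f (t, x)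

/-- The Euclidean norm on `ℝ³` (the cutoff `φ` is radial with respect to it). -/
def enorm3 (x : V3) : ℝ := Real.sqrt (∑ i, x i ^ 2)

/-- `Jof S` is the largest integer `J` with `2^J ≤ S`. -/
def Jof (S : ℝ) : ℤ := ⌊Real.logb 2 S⌋

/-- The `k`-th Fourier coefficient of a (`2π`-)periodic function on `ℝ³`. -/
def fcoef (g : V3 → ℝ) (k : Fin 3 → ℤ) : ℂ :=
  (((2 * Real.pi) ^ (3 : ℕ))⁻¹ : ℝ) •
    ∫ x in T3, (g x : ℂ) * Complex.exp (-(Complex.I * ((∑ i, (k i : ℝ) * x i : ℝ) : ℂ)))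

/-- The low-frequency cutoff `P_{≤S}` associated with the cutoff function `φ`: on a
périodic function `g` it multiplies the `k`-th Fourier coefficient by `φ(k / 2^J)`,
where `J = Jof S` is the largest integer with `2^J ≤ S`.  (For a Schwartz-class cutoff
this agrees with convolution against the rescaled inverse Fourier transform
`2^{3J} φ̌(2^J ·)` of `φ`.) -/
def Pse (φ : V3 → ℝ) (S : ℝ) (g : V3 → ℝ) (x : V3) : ℝ :=
  (∑' k : Fin 3 → ℤ,
      ((φ (fun i => (k i : ℝ) / (2 : ℝ) ^ Jof S) : ℝ) : ℂ) * fcoef g k *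
        Complex.exp (Complex.I * ((∑ i, (k i : ℝ) * x i : ℝ) : ℂ))).re

/-- `P_{≤S}` applied in the space variable to a time-dependent function. -/
def PseT (φ : V3 → ℝ) (S : ℝ) (f : ℝ × V3 → ℝ) (tx : ℝ × V3) : ℝ :=
  Pse φ S (fun y => f (tx.1, y)) tx.2

/-- The hypotheses on the fixed cutoff function `φ`: smooth, radial, `≡ 1` on the closed
unit ball and supported in `B(0,2)`. -/
def IsCutoff (φ : V3 → ℝ) : Prop :=
  ContDiff ℝ (⊤ : ℕ∞) φ ∧ (∀ x y : V3, enorm3 x = enorm3 y → φ x = φ y) ∧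
    (∀ x : V3, enorm3 x ≤ 1 → φ x = 1) ∧ (∀ x : V3, 2 ≤ enorm3 x → φ x = 0)

open scoped FourierTransform SchwartzMap

/-- Euclidean three-space, the domain of the Schwartz kernels. -/
abbrev E3 : Type := EuclideanSpace ℝ (Fin 3)

/-- The plane wave `x ↦ exp (i k·x)` with real frequency `k`. -/
def planeWave (k x : V3) : ℂ := Complex.exp (Complex.I * ((∑ i, k i * x i : ℝ) : ℂ))

/-- Convolution of `h` with the kernel `ψ` rescaled to length `2π / Λ`. -/
def scaledConv (ψ : 𝓢(E3, ℂ)) (Λ : ℝ) (h : V3 → ℂ) (x : V3) : ℂ :=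
  ∫ y : E3, h (fun i => x i - 2 * Real.pi / Λ * y i) * ψ y

lemma norm_planeWave (k x : V3) : ‖planeWave k x‖ = 1 := by
  rw [planeWave, mul_comm, Complex.norm_exp_ofReal_mul_I]

lemma contDiff_planeWave (k : V3) : ContDiff ℝ (⊤ : ℕ∞) (planeWave k) := by
  unfold planeWave
  have h : ContDiff ℝ (⊤ : ℕ∞) fun x : V3 => ∑ i, k i * x i :=
    ContDiff.sum fun i _ => contDiff_const.mul (contDiff_apply ℝ ℝ i)
  exact ContDiff.cexp (contDiff_const.mul (Complex.ofRealCLM.contDiff.comp h))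

lemma planeWave_add (k m x : V3) : planeWave (k + m) x = planeWave k x * planeWave m x := by
  simp only [planeWave, ← Complex.exp_add, Pi.add_apply, add_mul, Finset.sum_add_distrib]
  push_cast
  ring_nf

lemma planeWave_neg (k x : V3) : planeWave (-k) x = (starRingEnd ℂ) (planeWave k x) := by
  simp only [planeWave, ← Complex.exp_conj, map_mul, Complex.conj_I, Complex.conj_ofReal,
    Pi.neg_apply, neg_mul, Finset.sum_neg_distrib]
  push_cast
  ring_nf

lemma fderiv_planeWave (k x v : V3) :
    fderiv ℝ (planeWave k) x v = (Complex.I * ((∑ i, k i * v i : ℝ) : ℂ)) * planeWave k x := by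
  have h1 : HasFDerivAt (fun y : V3 => ∑ i, k i * y i)
      (∑ i, k i • ContinuousLinearMap.proj (R := ℝ) (φ := fun _ : Fin 3 => ℝ) i) x := by
    refine HasFDerivAt.fun_sum fun i _ => ?_
    exact (ContinuousLinearMap.proj (R := ℝ) (φ := fun _ : Fin 3 => ℝ) i).hasFDerivAt.const_mul (k i)
  have h2 := ((Complex.ofRealCLM.hasFDerivAt.comp x h1).const_mul Complex.I).cexp
  have h3 : HasFDerivAt (planeWave k) _ x := h2
  rw [h3.fderiv]
  simp [planeWave]
  ring

lemma enorm3_eq_norm (x : V3) : enorm3 x = ‖(WithLp.toLp 2 x : E3)‖ := by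
  simp [enorm3, EuclideanSpace.norm_eq]

lemma scaledConv_planeWave (χ : 𝓢(E3, ℂ)) (Λ : ℝ) (k x : V3) :
    scaledConv (𝓕⁻ χ) Λ (planeWave k) x
      = χ (WithLp.toLp 2 fun i => k i / Λ) * planeWave k x := by
  have h : χ (WithLp.toLp 2 fun i => k i / Λ)
      = (𝓕 (𝓕⁻ χ)) (WithLp.toLp 2 fun i => k i / Λ) := by
    rw [FourierTransform.fourier_fourierInv_eq]
  rw [h, SchwartzMap.fourier_coe, Real.fourier_eq', scaledConv, ← integral_mul_const]
  refine integral_congr_ae (Filter.Eventually.of_forall fun y => ?_)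
  simp only [planeWave, smul_eq_mul]
  rw [mul_right_comm, ← Complex.exp_add]
  congr 2
  simp only [PiLp.inner_apply, RCLike.inner_apply, conj_trivial, Fin.sum_univ_three]
  push_cast
  ring

/-- Trigonometric sums whose (real) frequencies lie in the ball of radius `R`. -/
def trigSpan (R : ℝ) : Submodule ℂ (V3 → ℂ) :=
  Submodule.span ℂ {h | ∃ k : V3, enorm3 k ≤ R ∧ h = planeWave k}

lemma planeWave_mem_trigSpan {R : ℝ} {k : V3} (hk : enorm3 k ≤ R) : planeWave k ∈ trigSpan R :=
  Submodule.subset_span ⟨k, hk, rfl⟩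

lemma contDiff_of_mem_trigSpan {R : ℝ} {h : V3 → ℂ} (hh : h ∈ trigSpan R) :
    ContDiff ℝ (⊤ : ℕ∞) h := by
  induction hh using Submodule.span_induction with
  | mem h hh => obtain ⟨k, -, rfl⟩ := hh; exact contDiff_planeWave k
  | zero => exact contDiff_const
  | add f g _ _ hf hg => exact hf.add hg
  | smul c f _ hf => exact contDiff_const.mul hf

lemma differentiable_of_mem_trigSpan {R : ℝ} {h : V3 → ℂ} (hh : h ∈ trigSpan R) :
    Differentiable ℝ h :=
  (contDiff_of_mem_trigSpan hh).differentiable (by simp)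

lemma exists_bound_of_mem_trigSpan {R : ℝ} {h : V3 → ℂ} (hh : h ∈ trigSpan R) :
    ∃ M : ℝ, ∀ x, ‖h x‖ ≤ M := by
  induction hh using Submodule.span_induction with
  | mem h hh => obtain ⟨k, -, rfl⟩ := hh; exact ⟨1, fun x => (norm_planeWave k x).le⟩
  | zero => exact ⟨0, fun x => by simp⟩
  | add f g _ _ hf hg =>
    obtain ⟨A, hA⟩ := hf
    obtain ⟨B, hB⟩ := hg
    exact ⟨A + B, fun x => (norm_add_le _ _).trans (add_le_add (hA x) (hB x))⟩
  | smul c f _ hf =>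
    obtain ⟨A, hA⟩ := hf
    refine ⟨‖c‖ * A, fun x => ?_⟩
    simpa using mul_le_mul_of_nonneg_left (hA x) (norm_nonneg c)

lemma mul_mem_trigSpan {R R' : ℝ} {f g : V3 → ℂ} (hf : f ∈ trigSpan R) (hg : g ∈ trigSpan R') :
    f * g ∈ trigSpan (R + R') := by
  induction hf using Submodule.span_induction with
  | mem f hf =>
    obtain ⟨k, hk, rfl⟩ := hf
    induction hg using Submodule.span_induction with
    | mem g hg =>
      obtain ⟨m, hm, rfl⟩ := hg
      have : planeWave k * planeWave m = planeWave (k + m) := by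
        ext x; simp [planeWave_add]
      rw [this]
      refine planeWave_mem_trigSpan ?_
      rw [enorm3_eq_norm] at hk hm ⊢
      rw [WithLp.toLp_add]
      exact (norm_add_le _ _).trans (add_le_add hk hm)
    | zero => simp
    | add f g _ _ hf hg => rw [mul_add]; exact add_mem hf hg
    | smul c f _ hf => rw [mul_smul_comm]; exact Submodule.smul_mem _ c hf
  | zero => simp
  | add f g _ _ hf hg => rw [add_mul]; exact add_mem hf hg
  | smul c f _ hf => rw [smul_mul_assoc]; exact Submodule.smul_mem _ c hf

lemma conj_mem_trigSpan {R : ℝ} {f : V3 → ℂ} (hf : f ∈ trigSpan R) :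
    (fun x => (starRingEnd ℂ) (f x)) ∈ trigSpan R := by
  induction hf using Submodule.span_induction with
  | mem f hf =>
    obtain ⟨k, hk, rfl⟩ := hf
    have : (fun x => (starRingEnd ℂ) (planeWave k x)) = planeWave (-k) := by
      ext x; rw [planeWave_neg]
    rw [this]
    refine planeWave_mem_trigSpan ?_
    rw [enorm3_eq_norm] at hk ⊢
    rwa [WithLp.toLp_neg, norm_neg]
  | zero =>
    simp only [Pi.zero_apply, map_zero]
    exact (trigSpan R).zero_mem
  | add f g _ _ hf hg =>
    have : (fun x => (starRingEnd ℂ) ((f + g) x))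
      = (fun x => (starRingEnd ℂ) (f x)) + fun x => (starRingEnd ℂ) (g x) := by ext x; simp
    rw [this]; exact add_mem hf hg
  | smul c f _ hf =>
    have : (fun x => (starRingEnd ℂ) ((c • f) x))
      = (starRingEnd ℂ) c • fun x => (starRingEnd ℂ) (f x) := by ext x; simp
    rw [this]; exact Submodule.smul_mem _ _ hf

lemma re_mem_trigSpan {R : ℝ} {f : V3 → ℂ} (hf : f ∈ trigSpan R) :
    (fun x => ((f x).re : ℂ)) ∈ trigSpan R := by
  have : (fun x => ((f x).re : ℂ)) = (1 / 2 : ℂ) • (f + fun x => (starRingEnd ℂ) (f x)) := by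
    ext x
    simp [Complex.add_conj]
  rw [this]
  exact Submodule.smul_mem _ _ (add_mem hf (conj_mem_trigSpan hf))

lemma fderiv_mem_trigSpan {R : ℝ} {h : V3 → ℂ} (hh : h ∈ trigSpan R) (v : V3) :
    (fun x => fderiv ℝ h x v) ∈ trigSpan R := by
  induction hh using Submodule.span_induction with
  | mem h hh =>
    obtain ⟨k, hk, rfl⟩ := hh
    have : (fun x => fderiv ℝ (planeWave k) x v)
        = (Complex.I * ((∑ i, k i * v i : ℝ) : ℂ)) • planeWave k := by
      ext x; rw [fderiv_planeWave]; rfl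
    rw [this]
    exact Submodule.smul_mem _ _ (planeWave_mem_trigSpan hk)
  | zero =>
    have : (fun x => fderiv ℝ (0 : V3 → ℂ) x v) = 0 := by ext x; simp
    rw [this]; exact zero_mem _
  | add f g hf' hg' hf hg =>
    have : (fun x => fderiv ℝ (f + g) x v)
        = (fun x => fderiv ℝ f x v) + fun x => fderiv ℝ g x v := by
      ext x
      rw [fderiv_add (differentiable_of_mem_trigSpan hf' x) (differentiable_of_mem_trigSpan hg' x)]
      rfl
    rw [this]; exact add_mem hf hg
  | smul c f hf' hf =>
    have : (fun x => fderiv ℝ (c • f) x v) = c • fun x => fderiv ℝ f x v := by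
      ext x
      rw [fderiv_const_smul (differentiable_of_mem_trigSpan hf' x)]
      rfl
    rw [this]; exact Submodule.smul_mem _ c hf

lemma integrable_scaledConv (ψ : 𝓢(E3, ℂ)) (Λ : ℝ) {h : V3 → ℂ} (hc : Continuous h) {M : ℝ}
    (hM : ∀ x, ‖h x‖ ≤ M) (x : V3) :
    Integrable fun y : E3 => h (fun i => x i - 2 * Real.pi / Λ * y i) * ψ y := by
  refine ψ.integrable.bdd_mul (c := M) ?_ (Filter.Eventually.of_forall fun y => hM _)
  refine (hc.comp ?_).aestronglyMeasurable
  fun_prop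

lemma scaledConv_add (ψ : 𝓢(E3, ℂ)) (Λ : ℝ) {f g : V3 → ℂ} (hf : Continuous f)
    (hg : Continuous g) {A B : ℝ} (hA : ∀ x, ‖f x‖ ≤ A) (hB : ∀ x, ‖g x‖ ≤ B) (x : V3) :
    scaledConv ψ Λ (f + g) x = scaledConv ψ Λ f x + scaledConv ψ Λ g x := by
  simp only [scaledConv, Pi.add_apply, add_mul]
  exact integral_add (integrable_scaledConv ψ Λ hf hA x) (integrable_scaledConv ψ Λ hg hB x)

lemma scaledConv_smul (ψ : 𝓢(E3, ℂ)) (Λ : ℝ) (c : ℂ) (f : V3 → ℂ) (x : V3) :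
    scaledConv ψ Λ (c • f) x = c * scaledConv ψ Λ f x := by
  simp only [scaledConv, Pi.smul_apply, smul_eq_mul, mul_assoc]
  exact integral_const_mul _ _

lemma norm_scaledConv_le (ψ : 𝓢(E3, ℂ)) (Λ : ℝ) {h : V3 → ℂ} {M : ℝ}
    (hM : ∀ x, ‖h x‖ ≤ M) (x : V3) :
    ‖scaledConv ψ Λ h x‖ ≤ M * ∫ y, ‖ψ y‖ := by
  rw [scaledConv, ← integral_const_mul]
  refine norm_integral_le_of_norm_le (ψ.integrable.norm.const_mul M)
    (Filter.Eventually.of_forall fun y => ?_)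
  rw [norm_mul]
  exact mul_le_mul_of_nonneg_right (hM _) (norm_nonneg _)

/-- The cutoff, viewed as a complex Schwartz function on Euclidean space and multiplied by a
smooth function `m`. -/
def cutoffSchwartz {φ : V3 → ℝ} (hφ : IsCutoff φ) (m : E3 → ℝ) (hm : ContDiff ℝ (⊤ : ℕ∞) m) :
    𝓢(E3, ℂ) :=
  HasCompactSupport.toSchwartzMap (f := fun ξ : E3 => ((m ξ * φ (WithLp.ofLp ξ) : ℝ) : ℂ))
    (by
      refine HasCompactSupport.of_support_subset_isCompact
        (isCompact_closedBall (0 : E3) 2) fun ξ hξ => ?_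
      by_contra hc
      refine hξ ?_
      have : 2 ≤ enorm3 (WithLp.ofLp ξ) := by
        rw [enorm3_eq_norm]
        simpa using (not_le.1 (fun h => hc (by simpa using h))).le
      simp [hφ.2.2.2 _ this])
    (by
      refine Complex.ofRealCLM.contDiff.comp (hm.mul (hφ.1.comp ?_))
      exact (PiLp.continuousLinearEquiv 2 ℝ fun _ : Fin 3 => ℝ).contDiff)

lemma cutoffSchwartz_apply {φ : V3 → ℝ} (hφ : IsCutoff φ) (m : E3 → ℝ)
    (hm : ContDiff ℝ (⊤ : ℕ∞) m) (ξ : E3) :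
    cutoffSchwartz hφ m hm ξ = ((m ξ * φ (WithLp.ofLp ξ) : ℝ) : ℂ) := rfl

lemma contDiff_coord (i : Fin 3) : ContDiff ℝ (⊤ : ℕ∞) fun ξ : E3 => ξ i := by
  fun_prop

lemma enorm3_div_le_one {k : V3} {Λ : ℝ} (hΛ : 0 < Λ) (hk : enorm3 k ≤ Λ) :
    enorm3 (fun i => k i / Λ) ≤ 1 := by
  have : (fun i => k i / Λ) = Λ⁻¹ • k := by ext i; simp; ring
  rw [this, enorm3_eq_norm, WithLp.toLp_smul, norm_smul, ← enorm3_eq_norm, Real.norm_eq_abs,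
    abs_of_pos (inv_pos.2 hΛ), inv_mul_le_iff₀ hΛ]
  simpa using hk

/-- A reproducing formula for directional derivatives of band-limited functions. -/
lemma fderiv_eq_sum_scaledConv {φ : V3 → ℝ} (hφ : IsCutoff φ) {Λ : ℝ} (hΛ : 0 < Λ)
    {h : V3 → ℂ} (hh : h ∈ trigSpan Λ) (x v : V3) :
    fderiv ℝ h x v = ∑ i, (Complex.I * Λ * v i) *
      scaledConv (𝓕⁻ (cutoffSchwartz hφ (fun ξ => ξ i) (contDiff_coord i))) Λ h x := by
  induction hh using Submodule.span_induction with
  | mem h hh =>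
    obtain ⟨k, hk, rfl⟩ := hh
    have h1 := hφ.2.2.1 _ (enorm3_div_le_one hΛ hk)
    rw [fderiv_planeWave]
    simp only [scaledConv_planeWave, cutoffSchwartz_apply, h1, ← mul_assoc]
    rw [← Finset.sum_mul]
    congr 1
    have : (Λ : ℂ) ≠ 0 := by exact_mod_cast hΛ.ne'
    push_cast
    rw [Finset.mul_sum]
    refine Finset.sum_congr rfl fun i _ => ?_
    field_simp
  | zero => simp [scaledConv]
  | add f g hf' hg' hf hg =>
    obtain ⟨A, hA⟩ := exists_bound_of_mem_trigSpan hf'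
    obtain ⟨B, hB⟩ := exists_bound_of_mem_trigSpan hg'
    rw [fderiv_add (differentiable_of_mem_trigSpan hf' x) (differentiable_of_mem_trigSpan hg' x),
      add_apply, hf, hg, ← Finset.sum_add_distrib]
    refine Finset.sum_congr rfl fun i _ => ?_
    rw [scaledConv_add _ _ (differentiable_of_mem_trigSpan hf').continuous
      (differentiable_of_mem_trigSpan hg').continuous hA hB, mul_add]
  | smul c f hf' hf =>
    rw [fderiv_const_smul (differentiable_of_mem_trigSpan hf' x),
      smul_apply, hf, smul_eq_mul, Finset.mul_sum]
    refine Finset.sum_congr rfl fun i _ => ?_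
    rw [scaledConv_smul]
    ring

/-- **Bernstein's inequality** for directional derivatives, with a constant depending only on the
cutoff. -/
lemma exists_norm_fderiv_le {φ : V3 → ℝ} (hφ : IsCutoff φ) :
    ∃ L : ℝ, 1 ≤ L ∧ ∀ (Λ : ℝ), 0 < Λ → ∀ h ∈ trigSpan Λ, ∀ M : ℝ, (∀ x, ‖h x‖ ≤ M) →
      ∀ x v, ‖fderiv ℝ h x v‖ ≤ L * Λ * ‖v‖ * M := by
  set c : Fin 3 → ℝ := fun i =>
    ∫ y, ‖(𝓕⁻ (cutoffSchwartz hφ (fun ξ => ξ i) (contDiff_coord i))) y‖ with hc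
  have hc0 : ∀ i, 0 ≤ c i := fun i => integral_nonneg fun y => norm_nonneg _
  refine ⟨1 + ∑ i, c i, le_add_of_nonneg_right (Finset.sum_nonneg fun i _ => hc0 i), ?_⟩
  intro Λ hΛ h hh M hM x v
  have hM0 : 0 ≤ M := (norm_nonneg _).trans (hM 0)
  rw [fderiv_eq_sum_scaledConv hφ hΛ hh]
  calc _ ≤ ∑ i, (Λ * ‖v‖) * (M * c i) := by
        refine norm_sum_le_of_le _ fun i _ => ?_
        rw [norm_mul]
        refine mul_le_mul ?_ (norm_scaledConv_le _ _ hM x) (norm_nonneg _) (by positivity)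
        simp only [norm_mul, Complex.norm_I, one_mul, Complex.norm_real, Real.norm_eq_abs,
          abs_of_pos hΛ]
        exact mul_le_mul_of_nonneg_left (norm_le_pi_norm v i) hΛ.le
    _ = (∑ i, c i) * Λ * ‖v‖ * M := by
        rw [← Finset.mul_sum, ← Finset.mul_sum]; ring
    _ ≤ (1 + ∑ i, c i) * Λ * ‖v‖ * M := by
        gcongr
        linarith

lemma norm_iteratedFDeriv_le_of_mem_trigSpan {L Λ : ℝ} (hL : 0 ≤ L) (hΛ : 0 ≤ Λ)
    (hB : ∀ h ∈ trigSpan Λ, ∀ M : ℝ, (∀ x, ‖h x‖ ≤ M) →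
      ∀ x v, ‖fderiv ℝ h x v‖ ≤ L * Λ * ‖v‖ * M) (n : ℕ) {h : V3 → ℂ} (hh : h ∈ trigSpan Λ)
    {M : ℝ} (hM : ∀ x, ‖h x‖ ≤ M) (x : V3) :
    ‖iteratedFDeriv ℝ n h x‖ ≤ (L * Λ) ^ n * M := by
  have hM0 : 0 ≤ M := (norm_nonneg _).trans (hM 0)
  refine ContinuousMultilinearMap.opNorm_le_bound (by positivity) fun w => ?_
  induction n generalizing h M with
  | zero => simpa using hM x
  | succ n ih =>
    have hsm : ContDiff ℝ n (fderiv ℝ h) :=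
      (contDiff_of_mem_trigSpan hh).fderiv_right (by exact_mod_cast le_top)
    have h1 := ih (fderiv_mem_trigSpan hh (w (Fin.last n))) (hB h hh M hM · (w (Fin.last n)))
      (by positivity) (Fin.init w)
    rw [iteratedFDeriv_clm_apply_const_apply hsm le_rfl] at h1
    rw [iteratedFDeriv_succ_apply_right, Fin.prod_univ_castSucc]
    refine h1.trans (le_of_eq ?_)
    simp only [Fin.init]
    ring

/-- The integer lattice inside frequency space. -/
def latticeFreq (k : Fin 3 → ℤ) : V3 := fun i => (k i : ℝ)

/-- Fourier coefficients of complex-valued functions, extending `fcoef`. -/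
def fourierCoefC (h : V3 → ℂ) (k : Fin 3 → ℤ) : ℂ :=
  (((2 * Real.pi) ^ (3 : ℕ))⁻¹ : ℝ) •
    ∫ x in T3, h x * Complex.exp (-(Complex.I * ((∑ i, (k i : ℝ) * x i : ℝ) : ℂ)))

lemma integral_exp_int_mul (n : ℤ) :
    ∫ x in Set.Icc (-Real.pi) Real.pi, Complex.exp (Complex.I * n * (x : ℂ))
      = if n = 0 then 2 * (Real.pi : ℂ) else 0 := by
  rw [integral_Icc_eq_integral_Ioc, ← intervalIntegral.integral_of_le (by linarith [Real.pi_pos])]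
  split_ifs with h
  · subst h
    simp
    ring
  · have hn : Complex.I * n ≠ 0 := mul_ne_zero Complex.I_ne_zero (by exact_mod_cast h)
    rw [integral_exp_mul_complex hn, div_eq_zero_iff]
    left
    rw [sub_eq_zero, Complex.exp_eq_exp_iff_exists_int]
    exact ⟨n, by push_cast; ring⟩

lemma volume_restrict_T3 : (volume : Measure V3).restrict T3
    = Measure.pi fun _ : Fin 3 => (volume : Measure ℝ).restrict (Set.Icc (-Real.pi) Real.pi) := by
  rw [T3, ← Set.pi_univ_Icc, volume_pi, Measure.restrict_pi_pi]

lemma volume_real_T3 : (volume : Measure V3).real T3 = (2 * Real.pi) ^ 3 := by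
  rw [Measure.real, T3, Real.volume_Icc_pi]
  simp only [Finset.prod_const, Finset.card_univ, Fintype.card_fin, ENNReal.toReal_pow]
  rw [ENNReal.toReal_ofReal (by linarith [Real.pi_pos])]
  ring

lemma fourierCoefC_planeWave (m k : Fin 3 → ℤ) :
    fourierCoefC (planeWave (latticeFreq m)) k = if m = k then 1 else 0 := by
  have h1 : ∀ x : V3, planeWave (latticeFreq m) x *
      Complex.exp (-(Complex.I * ((∑ i, (k i : ℝ) * x i : ℝ) : ℂ)))
      = ∏ i, Complex.exp (Complex.I * ((m i - k i : ℤ) : ℂ) * (x i : ℂ)) := by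
    intro x
    rw [planeWave, ← Complex.exp_add, ← Complex.exp_sum]
    congr 1
    simp only [latticeFreq, Fin.sum_univ_three]
    push_cast
    ring
  rw [fourierCoefC, volume_restrict_T3]
  simp only [h1]
  rw [integral_fintype_prod_eq_prod
    (f := fun i (t : ℝ) => Complex.exp (Complex.I * ((m i - k i : ℤ) : ℂ) * (t : ℂ)))]
  simp only [integral_exp_int_mul]
  split_ifs with h
  · subst h
    have : (Real.pi : ℂ) ≠ 0 := by exact_mod_cast Real.pi_ne_zero
    simp only [sub_self, if_true, Finset.prod_const, Finset.card_univ, Fintype.card_fin]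
    rw [Complex.real_smul]
    push_cast
    field_simp
  · obtain ⟨i, hi⟩ := Function.ne_iff.1 h
    rw [Finset.prod_eq_zero (Finset.mem_univ i) (if_neg (sub_ne_zero.2 hi)), smul_zero]

lemma integrableOn_fourierCoefC {h : V3 → ℂ} (hc : Continuous h) (k : Fin 3 → ℤ) :
    IntegrableOn (fun x => h x *
      Complex.exp (-(Complex.I * ((∑ i, (k i : ℝ) * x i : ℝ) : ℂ)))) T3 := by
  refine Continuous.integrableOn_Icc (hc.mul ?_)
  have h1 : (fun x : V3 => Complex.exp (-(Complex.I * ((∑ i, (k i : ℝ) * x i : ℝ) : ℂ))))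
      = planeWave (-latticeFreq k) := by
    ext x
    simp [planeWave, latticeFreq]
  rw [h1]
  exact (contDiff_planeWave _).continuous

lemma fourierCoefC_add {f g : V3 → ℂ} (hf : Continuous f) (hg : Continuous g) (k : Fin 3 → ℤ) :
    fourierCoefC (f + g) k = fourierCoefC f k + fourierCoefC g k := by
  simp only [fourierCoefC, Pi.add_apply, add_mul]
  rw [integral_add (integrableOn_fourierCoefC hf k) (integrableOn_fourierCoefC hg k), smul_add]

lemma fourierCoefC_smul (c : ℂ) (f : V3 → ℂ) (k : Fin 3 → ℤ) :
    fourierCoefC (c • f) k = c * fourierCoefC f k := by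
  simp only [fourierCoefC, Pi.smul_apply, smul_eq_mul, mul_assoc]
  rw [integral_const_mul, mul_smul_comm]

lemma norm_fourierCoefC_le {h : V3 → ℂ} {M : ℝ} (hM : ∀ x, ‖h x‖ ≤ M) (k : Fin 3 → ℤ) :
    ‖fourierCoefC h k‖ ≤ M := by
  have hpi := Real.pi_pos
  have h1 : ‖∫ x in T3, h x * Complex.exp (-(Complex.I * ((∑ i, (k i : ℝ) * x i : ℝ) : ℂ)))‖
      ≤ M * (volume : Measure V3).real T3 := by
    refine norm_setIntegral_le_of_norm_le_const ?_ fun x _ => ?_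
    · rw [T3]; exact isCompact_Icc.measure_lt_top
    · rw [norm_mul, Complex.norm_exp]
      simpa using hM x
  rw [volume_real_T3] at h1
  rw [fourierCoefC, norm_smul, Real.norm_eq_abs, abs_of_pos (by positivity),
    inv_mul_le_iff₀ (by positivity), mul_comm]
  exact h1

/-- A finite set of lattice frequencies containing the support of `φ (· / Λ)`. -/
def freqBox (Λ : ℝ) : Finset (Fin 3 → ℤ) :=
  Fintype.piFinset fun _ => Finset.Icc (-⌈2 * Λ⌉) ⌈2 * Λ⌉

lemma enorm3_le_of_cutoff_ne_zero {φ : V3 → ℝ} (hφ : IsCutoff φ) {Λ : ℝ} (hΛ : 0 < Λ)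
    {k : V3} (hk : φ (fun i => k i / Λ) ≠ 0) : enorm3 k ≤ 2 * Λ := by
  by_contra hc
  refine hk (hφ.2.2.2 _ ?_)
  have : (fun i => k i / Λ) = Λ⁻¹ • k := by ext i; simp; ring
  rw [this, enorm3_eq_norm, WithLp.toLp_smul, norm_smul, ← enorm3_eq_norm, Real.norm_eq_abs,
    abs_of_pos (inv_pos.2 hΛ), le_inv_mul_iff₀ hΛ]
  linarith

lemma mem_freqBox {φ : V3 → ℝ} (hφ : IsCutoff φ) {Λ : ℝ} (hΛ : 0 < Λ) {k : Fin 3 → ℤ}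
    (hk : φ (fun i => (k i : ℝ) / Λ) ≠ 0) : k ∈ freqBox Λ := by
  have h := enorm3_le_of_cutoff_ne_zero hφ hΛ (k := latticeFreq k) hk
  rw [freqBox, Fintype.mem_piFinset]
  intro i
  have h1 : |(k i : ℝ)| ≤ 2 * Λ := by
    rw [enorm3_eq_norm] at h
    exact (PiLp.norm_apply_le (WithLp.toLp 2 (latticeFreq k) : E3) i).trans h
  have h2 := h1.trans (Int.le_ceil (2 * Λ))
  rw [abs_le] at h2
  rw [Finset.mem_Icc]
  exact ⟨by exact_mod_cast h2.1, by exact_mod_cast h2.2⟩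

/-- The frequency cutoff at scale `Λ`, as a finite Fourier sum. -/
def freqCutoff (φ : V3 → ℝ) (Λ : ℝ) (h : V3 → ℂ) (x : V3) : ℂ :=
  ∑ k ∈ freqBox Λ, ((φ (fun i => (k i : ℝ) / Λ) : ℝ) : ℂ) * fourierCoefC h k *
    planeWave (latticeFreq k) x

lemma Pse_eq_re_freqCutoff {φ : V3 → ℝ} (hφ : IsCutoff φ) (S : ℝ) (F : V3 → ℝ) (x : V3) :
    Pse φ S F x = (freqCutoff φ ((2 : ℝ) ^ Jof S) (fun z => (F z : ℂ)) x).re := by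
  rw [Pse, freqCutoff, tsum_eq_sum (s := freqBox ((2 : ℝ) ^ Jof S))]
  · rfl
  · intro k hk
    have : φ (fun i => (k i : ℝ) / (2 : ℝ) ^ Jof S) = 0 := by
      by_contra hc
      exact hk (mem_freqBox hφ (by positivity) hc)
    simp [this]

lemma freqCutoff_mem_trigSpan {φ : V3 → ℝ} (hφ : IsCutoff φ) {Λ : ℝ} (hΛ : 0 < Λ)
    (h : V3 → ℂ) : freqCutoff φ Λ h ∈ trigSpan (2 * Λ) := by
  have : freqCutoff φ Λ h = ∑ k ∈ freqBox Λ, (((φ (fun i => (k i : ℝ) / Λ) : ℝ) : ℂ) *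
      fourierCoefC h k) • planeWave (latticeFreq k) := by
    ext x; simp [freqCutoff]
  rw [this]
  refine Submodule.sum_mem _ fun k _ => ?_
  by_cases hk : φ (fun i => (k i : ℝ) / Λ) = 0
  · simp [hk]
  · exact Submodule.smul_mem _ _
      (planeWave_mem_trigSpan (enorm3_le_of_cutoff_ne_zero hφ hΛ (k := latticeFreq k) hk))

lemma freqCutoff_add (φ : V3 → ℝ) (Λ : ℝ) {f g : V3 → ℂ} (hf : Continuous f)
    (hg : Continuous g) (x : V3) :
    freqCutoff φ Λ (f + g) x = freqCutoff φ Λ f x + freqCutoff φ Λ g x := by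
  simp only [freqCutoff, fourierCoefC_add hf hg, mul_add, add_mul, Finset.sum_add_distrib]

lemma freqCutoff_smul (φ : V3 → ℝ) (Λ : ℝ) (c : ℂ) (f : V3 → ℂ) (x : V3) :
    freqCutoff φ Λ (c • f) x = c * freqCutoff φ Λ f x := by
  simp only [freqCutoff, fourierCoefC_smul, Finset.mul_sum]
  exact Finset.sum_congr rfl fun k _ => by ring

lemma norm_freqCutoff_le (φ : V3 → ℝ) (Λ : ℝ) {h : V3 → ℂ} {M : ℝ} (hM : ∀ x, ‖h x‖ ≤ M)
    (x : V3) :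
    ‖freqCutoff φ Λ h x‖ ≤ M * ∑ k ∈ freqBox Λ, |φ (fun i => (k i : ℝ) / Λ)| := by
  rw [Finset.mul_sum]
  refine norm_sum_le_of_le _ fun k _ => ?_
  rw [norm_mul, norm_mul, norm_planeWave, mul_one, Complex.norm_real, Real.norm_eq_abs, mul_comm]
  exact mul_le_mul_of_nonneg_right (norm_fourierCoefC_le hM k) (abs_nonneg _)

/-- Trigonometric polynomials on the torus. -/
def torusTrig : Submodule ℂ (V3 → ℂ) :=
  Submodule.span ℂ (Set.range fun k : Fin 3 → ℤ => planeWave (latticeFreq k))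

lemma continuous_bounded_of_mem_torusTrig {h : V3 → ℂ} (hh : h ∈ torusTrig) :
    Continuous h ∧ ∃ M : ℝ, ∀ x, ‖h x‖ ≤ M := by
  induction hh using Submodule.span_induction with
  | mem h hh =>
    obtain ⟨k, rfl⟩ := hh
    exact ⟨(contDiff_planeWave _).continuous, 1, fun x => (norm_planeWave _ x).le⟩
  | zero => exact ⟨continuous_const, 0, fun x => by simp⟩
  | add f g _ _ hf hg =>
    obtain ⟨hf, A, hA⟩ := hf
    obtain ⟨hg, B, hB⟩ := hg
    exact ⟨hf.add hg, A + B, fun x => (norm_add_le _ _).trans (add_le_add (hA x) (hB x))⟩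
  | smul c f _ hf =>
    obtain ⟨hf, A, hA⟩ := hf
    refine ⟨hf.const_smul c, ‖c‖ * A, fun x => ?_⟩
    simpa using mul_le_mul_of_nonneg_left (hA x) (norm_nonneg c)

/-- The convolution kernel of the cutoff operator. -/
def cutoffKernel {φ : V3 → ℝ} (hφ : IsCutoff φ) : 𝓢(E3, ℂ) :=
  𝓕⁻ (cutoffSchwartz hφ (fun _ => 1) contDiff_const)

lemma freqCutoff_eq_scaledConv_of_mem_torusTrig {φ : V3 → ℝ} (hφ : IsCutoff φ) {Λ : ℝ}
    (hΛ : 0 < Λ) {h : V3 → ℂ} (hh : h ∈ torusTrig) (x : V3) :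
    freqCutoff φ Λ h x = scaledConv (cutoffKernel hφ) Λ h x := by
  induction hh using Submodule.span_induction with
  | mem h hh =>
    obtain ⟨m, rfl⟩ := hh
    rw [cutoffKernel, scaledConv_planeWave, cutoffSchwartz_apply, freqCutoff]
    simp only [fourierCoefC_planeWave]
    rw [Finset.sum_eq_single m]
    · simp [latticeFreq]
    · intro k _ hk
      simp [hk.symm]
    · intro hm
      have : φ (fun i => (m i : ℝ) / Λ) = 0 := by
        by_contra hc
        exact hm (mem_freqBox hφ hΛ hc)
      simp [this]
  | zero => simp [freqCutoff, fourierCoefC, scaledConv]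
  | add f g hf' hg' hf hg =>
    obtain ⟨hfc, A, hA⟩ := continuous_bounded_of_mem_torusTrig hf'
    obtain ⟨hgc, B, hB⟩ := continuous_bounded_of_mem_torusTrig hg'
    rw [freqCutoff_add φ Λ hfc hgc, scaledConv_add _ Λ hfc hgc hA hB, hf, hg]
  | smul c f _ hf => rw [freqCutoff_smul, scaledConv_smul, hf]

lemma mFourier_coe (m : Fin 3 → ℤ) (x : V3) :
    UnitAddTorus.mFourier m (fun i => ((x i : ℝ) : UnitAddCircle))
      = planeWave (latticeFreq m) (fun i => 2 * Real.pi * x i) := by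
  simp only [UnitAddTorus.mFourier, ContinuousMap.coe_mk, fourier_coe_apply]
  rw [← Complex.exp_sum, planeWave]
  congr 1
  simp only [latticeFreq, Fin.sum_univ_three]
  push_cast
  ring

/-- A continuous periodic function descends to a continuous function on the unit torus. -/
lemma exists_torus_lift {F : V3 → ℂ} (hF : Continuous F) (hp : PerSpace F) :
    ∃ G : C(UnitAddTorus (Fin 3), ℂ), ∀ x : V3,
      G (fun i => ((x i : ℝ) : UnitAddCircle)) = F (fun i => 2 * Real.pi * x i) := by
  have hq : IsOpenQuotientMap
      (Pi.map fun (_ : Fin 3) (t : ℝ) => (t : UnitAddCircle)) :=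
    IsOpenQuotientMap.piMap fun _ => QuotientAddGroup.isOpenQuotientMap_mk
  choose r hr using hq.surjective
  have key : ∀ x : V3, F (fun i => 2 * Real.pi *
      r (Pi.map (fun (_ : Fin 3) (t : ℝ) => (t : UnitAddCircle)) x) i)
      = F (fun i => 2 * Real.pi * x i) := by
    intro x
    have h1 : ∀ i, ∃ n : ℤ,
        n • (1 : ℝ) = r (Pi.map (fun (_ : Fin 3) (t : ℝ) => (t : UnitAddCircle)) x) i - x i := by
      intro i
      have h2 := congrFun (hr (Pi.map (fun (_ : Fin 3) (t : ℝ) => (t : UnitAddCircle)) x)) i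
      simp only [Pi.map_apply] at h2
      obtain ⟨n, hn⟩ := AddSubgroup.mem_zmultiples_iff.1 (QuotientAddGroup.eq_iff_sub_mem.1 h2)
      exact ⟨n, hn⟩
    choose n hn using h1
    rw [← hp (fun i => 2 * Real.pi * x i) n]
    congr 1
    ext i
    have := hn i
    simp only [zsmul_eq_mul, mul_one] at this
    rw [this]
    ring
  refine ⟨⟨fun θ => F (fun i => 2 * Real.pi * r θ i), ?_⟩, fun x => key x⟩
  rw [hq.isQuotientMap.continuous_iff]
  have : (fun θ => F (fun i => 2 * Real.pi * r θ i)) ∘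
      (Pi.map fun (_ : Fin 3) (t : ℝ) => (t : UnitAddCircle))
      = fun x : V3 => F (fun i => 2 * Real.pi * x i) := funext key
  rw [this]
  fun_prop

lemma exists_torusTrig_near {F : V3 → ℂ} (hF : Continuous F) (hp : PerSpace F) {ε : ℝ}
    (hε : 0 < ε) : ∃ Q ∈ torusTrig, ∀ x, ‖F x - Q x‖ ≤ ε := by
  obtain ⟨G, hG⟩ := exists_torus_lift hF hp
  have hd : G ∈ closure (Submodule.span ℂ
      (Set.range (UnitAddTorus.mFourier (d := Fin 3))) : Set C(UnitAddTorus (Fin 3), ℂ)) := by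
    have := UnitAddTorus.span_mFourier_closure_eq_top (d := Fin 3)
    have h2 : G ∈ (Submodule.span ℂ
      (Set.range (UnitAddTorus.mFourier (d := Fin 3)))).topologicalClosure := by
      rw [this]; trivial
    exact h2
  obtain ⟨P, hP, hPG⟩ := Metric.mem_closure_iff.1 hd ε hε
  have hlift : ∀ P ∈ Submodule.span ℂ (Set.range (UnitAddTorus.mFourier (d := Fin 3))),
      (fun x : V3 => P (fun i => ((x i / (2 * Real.pi) : ℝ) : UnitAddCircle))) ∈ torusTrig := by
    intro P hP
    induction hP using Submodule.span_induction with
    | mem P hP =>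
      obtain ⟨m, rfl⟩ := hP
      refine Submodule.subset_span ⟨m, ?_⟩
      ext x
      rw [mFourier_coe m (fun i => x i / (2 * Real.pi))]
      congr 1
      ext i
      have := Real.pi_ne_zero
      field_simp
    | zero => exact torusTrig.zero_mem
    | add f g _ _ hf hg => exact add_mem hf hg
    | smul c f _ hf => exact Submodule.smul_mem _ c hf
  refine ⟨_, hlift P hP, fun x => ?_⟩
  have h1 : F x = G (fun i => ((x i / (2 * Real.pi) : ℝ) : UnitAddCircle)) := by
    rw [hG (fun i => x i / (2 * Real.pi))]
    congr 1
    ext i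
    have := Real.pi_ne_zero
    field_simp
  rw [h1, ← dist_eq_norm]
  exact (ContinuousMap.dist_apply_le_dist _).trans hPG.le

lemma freqCutoff_eq_scaledConv {φ : V3 → ℝ} (hφ : IsCutoff φ) {Λ : ℝ} (hΛ : 0 < Λ)
    {F : V3 → ℂ} (hF : Continuous F) (hp : PerSpace F) (x : V3) :
    freqCutoff φ Λ F x = scaledConv (cutoffKernel hφ) Λ F x := by
  set A := ∑ k ∈ freqBox Λ, |φ (fun i => (k i : ℝ) / Λ)|
  set B := ∫ y, ‖cutoffKernel hφ y‖
  have hA : 0 ≤ A := Finset.sum_nonneg fun k _ => abs_nonneg _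
  have hB : 0 ≤ B := integral_nonneg fun y => norm_nonneg _
  rw [← sub_eq_zero, ← norm_le_zero_iff]
  refine le_of_forall_pos_le_add fun δ hδ => ?_
  obtain ⟨Q, hQ, hFQ⟩ := exists_torusTrig_near hF hp (ε := δ / (A + B + 1)) (by positivity)
  obtain ⟨hQc, M, hM⟩ := continuous_bounded_of_mem_torusTrig hQ
  have hs : F = (F - Q) + Q := by simp
  have h1 : freqCutoff φ Λ F x = freqCutoff φ Λ (F - Q) x + freqCutoff φ Λ Q x := by
    conv_lhs => rw [hs]
    exact freqCutoff_add φ Λ (hF.sub hQc) hQc x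
  have h2 : scaledConv (cutoffKernel hφ) Λ F x
      = scaledConv (cutoffKernel hφ) Λ (F - Q) x + scaledConv (cutoffKernel hφ) Λ Q x := by
    conv_lhs => rw [hs]
    exact scaledConv_add _ Λ (hF.sub hQc) hQc hFQ hM x
  rw [h1, h2, freqCutoff_eq_scaledConv_of_mem_torusTrig hφ hΛ hQ, add_sub_add_right_eq_sub]
  calc _ ≤ δ / (A + B + 1) * A + δ / (A + B + 1) * B :=
        (norm_sub_le _ _).trans
          (add_le_add (norm_freqCutoff_le φ Λ hFQ x) (norm_scaledConv_le _ Λ hFQ x))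
    _ = δ * ((A + B) / (A + B + 1)) := by ring
    _ ≤ 0 + δ := by
        rw [zero_add]
        exact mul_le_of_le_one_right hδ.le ((div_le_one (by positivity)).2 (by linarith))

lemma integrable_shift_mul_re (ψ : 𝓢(E3, ℂ)) (c : ℝ) {h : V3 → ℝ} (hc : Continuous h) {M : ℝ}
    (hM : ∀ x, |h x| ≤ M) (x : V3) :
    Integrable fun y : E3 => h (fun i => x i - c * y i) * (ψ y).re := by
  refine ψ.integrable.re.bdd_mul (c := M) ?_ (Filter.Eventually.of_forall fun y => hM _)
  refine (hc.comp ?_).aestronglyMeasurable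
  fun_prop

lemma integral_re_cutoffKernel {φ : V3 → ℝ} (hφ : IsCutoff φ) :
    ∫ y, (cutoffKernel hφ y).re = 1 := by
  have h := scaledConv_planeWave (cutoffSchwartz hφ (fun _ => 1) contDiff_const) 1 0 0
  have h0 : planeWave 0 = fun _ => 1 := by ext x; simp [planeWave]
  have h1 : φ 0 = 1 := hφ.2.2.1 0 (by simp [enorm3])
  simp only [scaledConv, h0, one_mul, mul_one, cutoffSchwartz_apply, Pi.zero_apply, zero_div] at h
  have h2 : φ (fun _ => 0) = 1 := h1
  rw [h2] at h
  have h3 := integral_re (cutoffKernel hφ).integrable (μ := volume)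
  simp only [RCLike.re_to_complex] at h3
  rw [h3, cutoffKernel, h]
  simp

lemma Pse_eq_integral {φ : V3 → ℝ} (hφ : IsCutoff φ) (S : ℝ) {F : V3 → ℝ} (hF : Continuous F)
    (hp : PerSpace F) {M : ℝ} (hM : ∀ x, |F x| ≤ M) (x : V3) :
    Pse φ S F x = ∫ y : E3, F (fun i => x i - 2 * Real.pi / (2 : ℝ) ^ Jof S * y i) *
      (cutoffKernel hφ y).re := by
  have hFc : Continuous fun z => (F z : ℂ) := Complex.continuous_ofReal.comp hF
  have hpc : PerSpace fun z => (F z : ℂ) := fun z v => congrArg Complex.ofReal (hp z v)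
  rw [Pse_eq_re_freqCutoff hφ, freqCutoff_eq_scaledConv hφ (by positivity) hFc hpc, scaledConv]
  have h := integral_re (μ := volume)
    (integrable_scaledConv (cutoffKernel hφ) ((2 : ℝ) ^ Jof S) hFc (M := M)
      (fun z => by simpa using hM z) x)
  simp only [RCLike.re_to_complex, Complex.re_ofReal_mul] at h
  exact h.symm

/-- The sum of the squared first moment and the second moment of the cutoff kernel. -/
def kernelMoment {φ : V3 → ℝ} (hφ : IsCutoff φ) : ℝ :=
  (∫ y, ‖y‖ ^ 1 * ‖cutoffKernel hφ y‖) ^ 2 + ∫ y, ‖y‖ ^ 2 * ‖cutoffKernel hφ y‖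

lemma kernelMoment_nonneg {φ : V3 → ℝ} (hφ : IsCutoff φ) : 0 ≤ kernelMoment hφ :=
  add_nonneg (sq_nonneg _) (integral_nonneg fun y => by positivity)

lemma abs_shift_sub_le {F : V3 → ℝ} {A : ℝ} (hA : 0 ≤ A)
    (hF : ∀ x y, |F x - F y| ≤ A * ‖x - y‖) {c : ℝ} (hc : 0 ≤ c) (x : V3) (y : E3) :
    |F (fun i => x i - c * y i) - F x| ≤ A * c * ‖y‖ := by
  refine (hF _ _).trans ?_
  rw [mul_assoc]
  refine mul_le_mul_of_nonneg_left ?_ hA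
  refine (pi_norm_le_iff_of_nonneg (by positivity)).2 fun i => ?_
  simp only [Pi.sub_apply, sub_sub_cancel_left, norm_neg, norm_mul, Real.norm_eq_abs,
    abs_of_nonneg hc]
  exact mul_le_mul_of_nonneg_left (PiLp.norm_apply_le y i) hc

lemma abs_integral_mul_re_le (ψ : 𝓢(E3, ℂ)) (p : ℕ) {D : ℝ} {a : E3 → ℝ}
    (ha : ∀ y, |a y| ≤ D * ‖y‖ ^ p) :
    |∫ y, a y * (ψ y).re| ≤ D * ∫ y, ‖y‖ ^ p * ‖ψ y‖ := by
  rw [← integral_const_mul, ← Real.norm_eq_abs]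
  refine norm_integral_le_of_norm_le ((ψ.integrable_pow_mul volume p).const_mul D)
    (Filter.Eventually.of_forall fun y => ?_)
  rw [norm_mul, Real.norm_eq_abs, Real.norm_eq_abs, ← mul_assoc]
  exact mul_le_mul (ha y) (Complex.abs_re_le_norm _) (abs_nonneg _) ((abs_nonneg _).trans (ha y))

/-- The commutator estimate without derivatives. -/
lemma abs_Pse_mul_sub_le {φ : V3 → ℝ} (hφ : IsCutoff φ) (S : ℝ) {F G : V3 → ℝ}
    (hFc : Continuous F) (hGc : Continuous G) (hFp : PerSpace F) (hGp : PerSpace G) {A B : ℝ}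
    (hFA : ∀ x, |F x| ≤ A) (hGB : ∀ x, |G x| ≤ B)
    (hFL : ∀ x y, |F x - F y| ≤ A * ‖x - y‖) (hGL : ∀ x y, |G x - G y| ≤ B * ‖x - y‖) (x : V3) :
    |Pse φ S F x * Pse φ S G x - Pse φ S (fun z => F z * G z) x|
      ≤ (2 * Real.pi / (2 : ℝ) ^ Jof S) ^ 2 * kernelMoment hφ * A * B := by
  have hA : 0 ≤ A := (abs_nonneg _).trans (hFA 0)
  have hB : 0 ≤ B := (abs_nonneg _).trans (hGB 0)
  have hFG : ∀ z, |F z * G z| ≤ A * B := fun z => by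
    rw [abs_mul]
    exact mul_le_mul (hFA z) (hGB z) (abs_nonneg _) hA
  have hFGp : PerSpace fun z => F z * G z := fun z v => by
    simp only [hFp z v, hGp z v]
  rw [Pse_eq_integral hφ S hFc hFp hFA, Pse_eq_integral hφ S hGc hGp hGB,
    Pse_eq_integral hφ S (F := fun z => F z * G z) (hFc.mul hGc) hFGp hFG]
  set c := 2 * Real.pi / (2 : ℝ) ^ Jof S with hc
  have hc0 : 0 ≤ c := by positivity
  set ψ := cutoffKernel hφ with hψ
  set a : E3 → ℝ := fun y => F (fun i => x i - c * y i) - F x with ha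
  set b : E3 → ℝ := fun y => G (fun i => x i - c * y i) - G x with hb
  have ia : Integrable fun y => a y * (ψ y).re :=
    integrable_shift_mul_re ψ c (h := fun z => F z - F x) (by fun_prop) (M := A + A)
      (fun z => (abs_sub _ _).trans (add_le_add (hFA z) (hFA x))) x
  have ib : Integrable fun y => b y * (ψ y).re :=
    integrable_shift_mul_re ψ c (h := fun z => G z - G x) (by fun_prop) (M := B + B)
      (fun z => (abs_sub _ _).trans (add_le_add (hGB z) (hGB x))) x
  have iab : Integrable fun y => a y * b y * (ψ y).re :=
    integrable_shift_mul_re ψ c (h := fun z => (F z - F x) * (G z - G x)) (by fun_prop)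
      (M := (A + A) * (B + B)) (fun z => by
        rw [abs_mul]
        exact mul_le_mul ((abs_sub _ _).trans (add_le_add (hFA z) (hFA x)))
          ((abs_sub _ _).trans (add_le_add (hGB z) (hGB x))) (abs_nonneg _) (by positivity)) x
  have iψ : Integrable fun y => (ψ y).re := ψ.integrable.re
  have hone : ∫ y, (ψ y).re = 1 := integral_re_cutoffKernel hφ
  have eF : ∫ y, F (fun i => x i - c * y i) * (ψ y).re = (∫ y, a y * (ψ y).re) + F x := by
    have : ∀ y : E3, F (fun i => x i - c * y i) * (ψ y).re
        = a y * (ψ y).re + F x * (ψ y).re := fun y => by simp only [ha]; ring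
    simp only [this]
    rw [integral_add ia (iψ.const_mul _), integral_const_mul, hone, mul_one]
  have eG : ∫ y, G (fun i => x i - c * y i) * (ψ y).re = (∫ y, b y * (ψ y).re) + G x := by
    have : ∀ y : E3, G (fun i => x i - c * y i) * (ψ y).re
        = b y * (ψ y).re + G x * (ψ y).re := fun y => by simp only [hb]; ring
    simp only [this]
    rw [integral_add ib (iψ.const_mul _), integral_const_mul, hone, mul_one]
  have eFG : ∫ y, F (fun i => x i - c * y i) * G (fun i => x i - c * y i) * (ψ y).re
      = (∫ y, a y * b y * (ψ y).re) + F x * (∫ y, b y * (ψ y).re)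
        + G x * (∫ y, a y * (ψ y).re) + F x * G x := by
    have : ∀ y : E3, F (fun i => x i - c * y i) * G (fun i => x i - c * y i) * (ψ y).re
        = a y * b y * (ψ y).re + F x * (b y * (ψ y).re) + G x * (a y * (ψ y).re)
          + F x * G x * (ψ y).re := fun y => by simp only [ha, hb]; ring
    simp only [this]
    have i2 : Integrable fun y => a y * b y * (ψ y).re + F x * (b y * (ψ y).re) :=
      iab.add (ib.const_mul _)
    have i3 : Integrable fun y => a y * b y * (ψ y).re + F x * (b y * (ψ y).re)
        + G x * (a y * (ψ y).re) := i2.add (ia.const_mul _)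
    rw [integral_add i3 (iψ.const_mul _), integral_add i2 (ia.const_mul _),
      integral_add iab (ib.const_mul _), integral_const_mul, integral_const_mul,
      integral_const_mul, hone, mul_one]
  have ba := abs_shift_sub_le hA hFL hc0 x
  have bb := abs_shift_sub_le hB hGL hc0 x
  have ka : |∫ y, a y * (ψ y).re| ≤ A * c * ∫ y, ‖y‖ ^ 1 * ‖ψ y‖ :=
    abs_integral_mul_re_le ψ 1 fun y => by simpa using ba y
  have kb : |∫ y, b y * (ψ y).re| ≤ B * c * ∫ y, ‖y‖ ^ 1 * ‖ψ y‖ :=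
    abs_integral_mul_re_le ψ 1 fun y => by simpa using bb y
  have kab : |∫ y, a y * b y * (ψ y).re| ≤ (A * c) * (B * c) * ∫ y, ‖y‖ ^ 2 * ‖ψ y‖ :=
    abs_integral_mul_re_le ψ 2 fun y => by
      rw [abs_mul]
      refine (mul_le_mul (ba y) (bb y) (abs_nonneg _) (by positivity)).trans (le_of_eq ?_)
      ring
  have hm1 : 0 ≤ ∫ y, ‖y‖ ^ 1 * ‖ψ y‖ := integral_nonneg fun y => by positivity
  rw [eF, eG, eFG]
  have e : ((∫ y, a y * (ψ y).re) + F x) * ((∫ y, b y * (ψ y).re) + G x)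
      - ((∫ y, a y * b y * (ψ y).re) + F x * (∫ y, b y * (ψ y).re)
        + G x * (∫ y, a y * (ψ y).re) + F x * G x)
      = (∫ y, a y * (ψ y).re) * (∫ y, b y * (ψ y).re) - ∫ y, a y * b y * (ψ y).re := by ring
  rw [e]
  refine (abs_sub _ _).trans ?_
  rw [abs_mul]
  refine (add_le_add (mul_le_mul ka kb (abs_nonneg _) (by positivity)) kab).trans (le_of_eq ?_)
  rw [kernelMoment]
  ring

lemma trigSpan_mono {R R' : ℝ} (h : R ≤ R') : trigSpan R ≤ trigSpan R' :=
  Submodule.span_mono fun _ ⟨k, hk, e⟩ => ⟨k, hk.trans h, e⟩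

lemma ofReal_Pse_mem_trigSpan {φ : V3 → ℝ} (hφ : IsCutoff φ) (S : ℝ) (F : V3 → ℝ) :
    (fun x => (Pse φ S F x : ℂ)) ∈ trigSpan (2 * (2 : ℝ) ^ Jof S) := by
  simp only [Pse_eq_re_freqCutoff hφ]
  exact re_mem_trigSpan (freqCutoff_mem_trigSpan hφ (by positivity) _)

lemma abs_sub_le_of_iteratedFDeriv_one {F : V3 → ℝ} (hF : ContDiff ℝ (⊤ : ℕ∞) F) {A : ℝ}
    (hA : ∀ x, ‖iteratedFDeriv ℝ 1 F x‖ ≤ A) (x y : V3) : |F x - F y| ≤ A * ‖x - y‖ :=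
  convex_univ.norm_image_sub_le_of_norm_fderiv_le (𝕜 := ℝ)
    (fun z _ => hF.differentiable (by simp) z)
    (fun z _ => by rw [← norm_iteratedFDeriv_one]; exact hA z) (Set.mem_univ y) (Set.mem_univ x)

lemma two_zpow_Jof_le {S : ℝ} (hS : 0 < S) : (2 : ℝ) ^ Jof S ≤ S := by
  rw [← Real.rpow_intCast, ← Real.le_logb_iff_rpow_le (by norm_num) hS]
  exact Int.floor_le _

lemma lt_two_mul_two_zpow_Jof {S : ℝ} (hS : 0 < S) : S < 2 * (2 : ℝ) ^ Jof S := by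
  have h : (2 : ℝ) * (2 : ℝ) ^ Jof S = (2 : ℝ) ^ ((Jof S : ℝ) + 1) := by
    rw [Real.rpow_add (by norm_num), Real.rpow_intCast, Real.rpow_one, mul_comm]
  rw [h, ← Real.logb_lt_iff_lt_rpow (by norm_num) hS]
  exact Int.lt_floor_add_one _

/-- **Mollification commutator estimate (quadratic version).**  With `f_ℓ = P_{≤ℓ⁻¹}f`,
`g_ℓ = P_{≤ℓ⁻¹}g`, `(fg)_ℓ = P_{≤ℓ⁻¹}(fg)`, one has
`‖f_ℓ g_ℓ - (fg)_ℓ‖_N ≤ C(N) ℓ^{2-N} ‖f‖₁ ‖g‖₁` for every `N ≥ 0`. -/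
theorem statement13 (φ : V3 → ℝ) (hφ : IsCutoff φ) (N : ℕ) :
    ∃ C : ℝ, 0 < C ∧
      ∀ T : ℝ, 0 < T →
      ∀ f g : ℝ × V3 → ℝ, ContDiff ℝ (⊤ : ℕ∞) f → PerSpaceT f → ContDiff ℝ (⊤ : ℕ∞) g → PerSpaceT g →
      ∀ ℓ : ℝ, 0 < ℓ → ℓ < 1 →
      ∀ Cf Cg : ℝ,
        (∀ t ∈ Set.Icc (0 : ℝ) T, ∀ x : V3, ∀ n : ℕ, n ≤ 1 →
          ‖iteratedFDeriv ℝ n (fun y => f (t, y)) x‖ ≤ Cf) →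
        (∀ t ∈ Set.Icc (0 : ℝ) T, ∀ x : V3, ∀ n : ℕ, n ≤ 1 →
          ‖iteratedFDeriv ℝ n (fun y => g (t, y)) x‖ ≤ Cg) →
        ∀ t ∈ Set.Icc (0 : ℝ) T, ∀ x : V3, ∀ n : ℕ, n ≤ N →
          ‖iteratedFDeriv ℝ n
              (fun y => Pse φ ℓ⁻¹ (fun z => f (t, z)) y * Pse φ ℓ⁻¹ (fun z => g (t, z)) y
                - Pse φ ℓ⁻¹ (fun z => f (t, z) * g (t, z)) y) x‖
            ≤ C * ℓ ^ ((2 : ℝ) - N) * Cf * Cg := by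
  obtain ⟨L, hL, hB⟩ := exists_norm_fderiv_le hφ
  have hm := kernelMoment_nonneg hφ
  have hpi := Real.pi_pos
  refine ⟨(4 * L) ^ N * (16 * Real.pi ^ 2 * kernelMoment hφ) + 1, by positivity, ?_⟩
  intro T _ f g hf hfp hg hgp ℓ hℓ hℓ1 Cf Cg hCf hCg t ht x n hn
  have hsec : ContDiff ℝ (⊤ : ℕ∞) fun y : V3 => (t, y) := contDiff_const.prodMk contDiff_id
  have hF : ContDiff ℝ (⊤ : ℕ∞) fun y => f (t, y) := hf.comp hsec
  have hG : ContDiff ℝ (⊤ : ℕ∞) fun y => g (t, y) := hg.comp hsec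
  have hFA : ∀ y, |f (t, y)| ≤ Cf := fun y => by simpa using hCf t ht y 0 zero_le_one
  have hGA : ∀ y, |g (t, y)| ≤ Cg := fun y => by simpa using hCg t ht y 0 zero_le_one
  have hCf0 : 0 ≤ Cf := (abs_nonneg _).trans (hFA 0)
  have hCg0 : 0 ≤ Cg := (abs_nonneg _).trans (hGA 0)
  have hsup := abs_Pse_mul_sub_le hφ ℓ⁻¹ hF.continuous hG.continuous (hfp t) (hgp t) hFA hGA
    (abs_sub_le_of_iteratedFDeriv_one hF fun y => hCf t ht y 1 le_rfl)
    (abs_sub_le_of_iteratedFDeriv_one hG fun y => hCg t ht y 1 le_rfl)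
  have hSpos : 0 < ℓ⁻¹ := inv_pos.2 hℓ
  have hup := two_zpow_Jof_le hSpos
  have hlo := lt_two_mul_two_zpow_Jof hSpos
  have hspan : (fun y => ((Pse φ ℓ⁻¹ (fun z => f (t, z)) y * Pse φ ℓ⁻¹ (fun z => g (t, z)) y
      - Pse φ ℓ⁻¹ (fun z => f (t, z) * g (t, z)) y : ℝ) : ℂ))
      ∈ trigSpan (4 * (2 : ℝ) ^ Jof ℓ⁻¹) := by
    have h1 := sub_mem (mul_mem_trigSpan (ofReal_Pse_mem_trigSpan hφ ℓ⁻¹ fun z => f (t, z))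
        (ofReal_Pse_mem_trigSpan hφ ℓ⁻¹ fun z => g (t, z)))
      (trigSpan_mono (by linarith) (ofReal_Pse_mem_trigSpan hφ ℓ⁻¹ fun z => f (t, z) * g (t, z)))
    refine trigSpan_mono (R := 2 * (2 : ℝ) ^ Jof ℓ⁻¹ + 2 * (2 : ℝ) ^ Jof ℓ⁻¹) (by linarith) ?_
    convert h1 using 1
    ext y
    simp
  set lam := (2 : ℝ) ^ Jof ℓ⁻¹ with hlam
  have hlam0 : 0 < lam := by positivity
  have hder := norm_iteratedFDeriv_le_of_mem_trigSpan (zero_le_one.trans hL)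
    (by positivity : 0 ≤ 4 * lam) (hB (4 * lam) (by positivity)) n hspan
    (M := (2 * Real.pi / lam) ^ 2 * kernelMoment hφ * Cf * Cg)
    (fun y => by rw [Complex.norm_real]; exact hsup y) x
  have hHsm : ContDiff ℝ (⊤ : ℕ∞) fun y => Pse φ ℓ⁻¹ (fun z => f (t, z)) y *
      Pse φ ℓ⁻¹ (fun z => g (t, z)) y - Pse φ ℓ⁻¹ (fun z => f (t, z) * g (t, z)) y :=
    Complex.reCLM.contDiff.comp (contDiff_of_mem_trigSpan hspan)
  have hnorm := Complex.ofRealLI.norm_iteratedFDeriv_comp_left (i := n) (x := x)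
    hHsm.contDiffAt (by exact_mod_cast le_top)
  rw [← hnorm]
  refine hder.trans ?_
  have hinv1 : 1 < ℓ⁻¹ := (one_lt_inv₀ hℓ).2 hℓ1
  have hbase : 1 ≤ L * (4 * lam) := by nlinarith
  have hpow : (L * (4 * lam)) ^ n ≤ (4 * L) ^ N * (ℓ⁻¹) ^ N := by
    refine (pow_le_pow_right₀ hbase hn).trans ?_
    rw [← mul_pow]
    refine pow_le_pow_left₀ (by positivity) ?_ N
    nlinarith
  have hq : 2 * Real.pi / lam ≤ 4 * Real.pi * ℓ := by
    rw [div_le_iff₀ hlam0]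
    have : 1 ≤ 2 * lam * ℓ := by
      have := mul_lt_mul_of_pos_right hlo hℓ
      rw [inv_mul_cancel₀ hℓ.ne'] at this
      exact this.le
    nlinarith
  have hexp : ℓ ^ ((2 : ℝ) - N) = (ℓ⁻¹) ^ N * ℓ ^ 2 := by
    rw [Real.rpow_sub hℓ, Real.rpow_natCast, Real.rpow_two, inv_pow]
    field_simp
  calc _ ≤ ((4 * L) ^ N * (ℓ⁻¹) ^ N) *
        ((4 * Real.pi * ℓ) ^ 2 * kernelMoment hφ * Cf * Cg) := by
        gcongr
    _ = (4 * L) ^ N * (16 * Real.pi ^ 2 * kernelMoment hφ) * ℓ ^ ((2 : ℝ) - N) * Cf * Cg := by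
        rw [hexp]; ring
    _ ≤ _ := by
        have := Real.rpow_pos_of_pos hℓ ((2 : ℝ) - N)
        gcongr
        linarith
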